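/- arXiv:0805.2494 — 2 statements merged into one kernel-verified Lean document; each statement's English description precedes it below -/
import Mathlib

section
/- The rectangle group R is isomorphic to the amalgamated free product (pushout) G₁ *_C G₂, where G₁ is the presented group ⟨a, c | a^{n_a} = c^{n_c} = 1⟩, G₂ is the presented group ⟨b, d | b^{n_b} = d^{n_d} = 1⟩, C is the free group on two generators s, t, and the amalgamation homomorphisms are determined by s ↦ a c⁻¹, t ↦ c⁻¹ a into G₁ and s ↦ b d⁻¹, t ↦ d⁻¹ b into G₂; the isomorphism carries the images of a, c, b, d in the pushout to the generators a, c, b, d of R. -/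
/-- The defining relations of the rectangle group `R(n_a, n_b, n_c, n_d)`:
generators `a, b, c, d` (indexed `0, 1, 2, 3`), relations
`a^{n_a} = b^{n_b} = c^{n_c} = d^{n_d} = 1`, `b a⁻¹ = d c⁻¹`, `c a⁻¹ = d b⁻¹`. -/
def rectRels (na nb nc nd : ℕ) : Set (FreeGroup (Fin 4)) :=
  {FreeGroup.of 0 ^ na, FreeGroup.of 1 ^ nb, FreeGroup.of 2 ^ nc, FreeGroup.of 3 ^ nd,
    FreeGroup.of 1 * (FreeGroup.of 0)⁻¹ * (FreeGroup.of 3 * (FreeGroup.of 2)⁻¹)⁻¹,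
    FreeGroup.of 2 * (FreeGroup.of 0)⁻¹ * (FreeGroup.of 3 * (FreeGroup.of 1)⁻¹)⁻¹}

/-- The rectangle group. -/
abbrev RectGroup (na nb nc nd : ℕ) : Type := PresentedGroup (rectRels na nb nc nd)

/-- The generator `a` of the rectangle group. -/
def Ra (na nb nc nd : ℕ) : RectGroup na nb nc nd := PresentedGroup.of 0
/-- The generator `b` of the rectangle group. -/
def Rb (na nb nc nd : ℕ) : RectGroup na nb nc nd := PresentedGroup.of 1
/-- The generator `c` of the rectangle group. -/
def Rc (na nb nc nd : ℕ) : RectGroup na nb nc nd := PresentedGroup.of 2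
/-- The generator `d` of the rectangle group. -/
def Rd (na nb nc nd : ℕ) : RectGroup na nb nc nd := PresentedGroup.of 3

/-- The relations of the free product of cyclic groups of orders `m` and `n`,
on two generators. -/
def twoCyclicRels (m n : ℕ) : Set (FreeGroup (Fin 2)) :=
  {FreeGroup.of 0 ^ m, FreeGroup.of 1 ^ n}

/-- A two-element family of groups, indexed by `Bool`. -/
def twoFam (G₁ G₂ : Type) : Bool → Type := fun i => match i with
  | true => G₁
  | false => G₂

instance twoFamGroup (G₁ G₂ : Type) [Group G₁] [Group G₂] :
    (i : Bool) → Group (twoFam G₁ G₂ i) := fun i => match i with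
  | true => inferInstanceAs (Group G₁)
  | false => inferInstanceAs (Group G₂)

/-- A pair of homomorphisms out of `K`, packaged as a `Bool`-indexed family. -/
def twoFamHom {K G₁ G₂ : Type} [Group K] [Group G₁] [Group G₂]
    (φ₁ : K →* G₁) (φ₂ : K →* G₂) : (i : Bool) → K →* twoFam G₁ G₂ i := fun i => match i with
  | true => φ₁
  | false => φ₂

/-- The amalgamation map `C → ⟨u, v | u^m = v^n = 1⟩`, `s ↦ u v⁻¹`, `t ↦ v⁻¹ u`,
where `C` is free on `s, t`. -/
def amalgMap (m n : ℕ) : FreeGroup (Fin 2) →* PresentedGroup (twoCyclicRels m n) :=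
  FreeGroup.lift
    ![PresentedGroup.of 0 * (PresentedGroup.of 1)⁻¹,
      (PresentedGroup.of 1)⁻¹ * PresentedGroup.of 0]

/-! Inverting both sides turns `c a⁻¹ = d b⁻¹` into `a c⁻¹ = b d⁻¹`, and moving `c` and `d` across
turns `b a⁻¹ = d c⁻¹` into `c⁻¹ a = d⁻¹ b`. So the two mixed relations of the rectangle group say
exactly that a homomorphism on `a, c` and one on `b, d` agree on the images of `s` and `t`: both
groups represent the same functor. -/

theorem inv_mul_eq_inv_mul_iff_mul_inv_eq_mul_inv {G : Type*} [Group G] {a b c d : G} :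
    c⁻¹ * a = d⁻¹ * b ↔ b * a⁻¹ = d * c⁻¹ := by
  rw [eq_comm, inv_mul_eq_iff_eq_mul, ← mul_assoc, mul_inv_eq_iff_eq_mul]

/-- The amalgamated free product `G₁ *_K G₂` along `φ₁ : K →* G₁` and `φ₂ : K →* G₂`, as the
pushout of the `Bool`-indexed family with `φ₁` at `true` and `φ₂` at `false`. -/
abbrev Amalgam {K G₁ G₂ : Type} [Group K] [Group G₁] [Group G₂] (φ₁ : K →* G₁) (φ₂ : K →* G₂) :
    Type :=
  Monoid.PushoutI (twoFamHom φ₁ φ₂)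

namespace Amalgam

variable {K G₁ G₂ : Type} [Group K] [Group G₁] [Group G₂] {φ₁ : K →* G₁} {φ₂ : K →* G₂}
  {H : Type*} [Group H]

variable (φ₁ φ₂) in
/-- The canonical map of the first factor into the amalgamated free product. -/
def inl : G₁ →* Amalgam φ₁ φ₂ :=
  Monoid.PushoutI.of (φ := twoFamHom φ₁ φ₂) true

variable (φ₁ φ₂) in
/-- The canonical map of the second factor into the amalgamated free product. -/
def inr : G₂ →* Amalgam φ₁ φ₂ :=
  Monoid.PushoutI.of (φ := twoFamHom φ₁ φ₂) false

theorem inl_comp_eq_inr_comp : (inl φ₁ φ₂).comp φ₁ = (inr φ₁ φ₂).comp φ₂ :=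
  (Monoid.PushoutI.of_comp_eq_base (φ := twoFamHom φ₁ φ₂) true).trans
    (Monoid.PushoutI.of_comp_eq_base (φ := twoFamHom φ₁ φ₂) false).symm

/-- The homomorphism out of the amalgamated free product induced by homomorphisms out of the two
factors that agree on the amalgamated group. -/
def lift (f₁ : G₁ →* H) (f₂ : G₂ →* H) (h : f₁.comp φ₁ = f₂.comp φ₂) : Amalgam φ₁ φ₂ →* H :=
  Monoid.PushoutI.lift (φ := twoFamHom φ₁ φ₂) (fun | true => f₁ | false => f₂) (f₁.comp φ₁)
    (fun | true => rfl | false => h.symm)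

@[simp]
theorem lift_inl (f₁ : G₁ →* H) (f₂ : G₂ →* H) (h : f₁.comp φ₁ = f₂.comp φ₂) (x : G₁) :
    lift f₁ f₂ h (inl φ₁ φ₂ x) = f₁ x :=
  Monoid.PushoutI.lift_of (φ := twoFamHom φ₁ φ₂) _ _ _ (i := true) x

@[simp]
theorem lift_inr (f₁ : G₁ →* H) (f₂ : G₂ →* H) (h : f₁.comp φ₁ = f₂.comp φ₂) (x : G₂) :
    lift f₁ f₂ h (inr φ₁ φ₂ x) = f₂ x :=
  Monoid.PushoutI.lift_of (φ := twoFamHom φ₁ φ₂) _ _ _ (i := false) x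

theorem hom_ext {f g : Amalgam φ₁ φ₂ →* H}
    (hl : f.comp (inl φ₁ φ₂) = g.comp (inl φ₁ φ₂))
    (hr : f.comp (inr φ₁ φ₂) = g.comp (inr φ₁ φ₂)) : f = g :=
  Monoid.PushoutI.hom_ext_nonempty fun | true => hl | false => hr

end Amalgam

/-- The free product `⟨u, v | u^m = v^n = 1⟩` of two cyclic groups; `PresentedGroup.of 0` is `u`
and `PresentedGroup.of 1` is `v`. -/
abbrev TwoCyclic (m n : ℕ) : Type := PresentedGroup (twoCyclicRels m n)

namespace TwoCyclic

variable {m n : ℕ} {H : Type*} [Group H]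

theorem of_zero_pow : (PresentedGroup.of 0 : TwoCyclic m n) ^ m = 1 :=
  PresentedGroup.one_of_mem (x := FreeGroup.of 0 ^ m) (by simp [twoCyclicRels])

theorem of_one_pow : (PresentedGroup.of 1 : TwoCyclic m n) ^ n = 1 :=
  PresentedGroup.one_of_mem (x := FreeGroup.of 1 ^ n) (by simp [twoCyclicRels])

/-- The homomorphism out of `⟨u, v | u^m = v^n = 1⟩` with prescribed images of `u` and `v`. -/
def lift (u v : H) (hu : u ^ m = 1) (hv : v ^ n = 1) : TwoCyclic m n →* H :=
  PresentedGroup.toGroup (f := ![u, v]) (by simp [twoCyclicRels, hu, hv])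

@[simp]
theorem lift_of_zero (u v : H) (hu : u ^ m = 1) (hv : v ^ n = 1) :
    lift u v hu hv (PresentedGroup.of 0) = u :=
  PresentedGroup.toGroup.of _

@[simp]
theorem lift_of_one (u v : H) (hu : u ^ m = 1) (hv : v ^ n = 1) :
    lift u v hu hv (PresentedGroup.of 1) = v :=
  PresentedGroup.toGroup.of _

theorem hom_ext {f g : TwoCyclic m n →* H}
    (h0 : f (PresentedGroup.of 0) = g (PresentedGroup.of 0))
    (h1 : f (PresentedGroup.of 1) = g (PresentedGroup.of 1)) : f = g :=
  PresentedGroup.ext fun | 0 => h0 | 1 => h1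

theorem comp_amalgMap_eq_comp_amalgMap_iff {m' n' : ℕ}
    (f : TwoCyclic m n →* H) (g : TwoCyclic m' n' →* H) :
    f.comp (amalgMap m n) = g.comp (amalgMap m' n') ↔
      g (.of 0) * (f (.of 0))⁻¹ = g (.of 1) * (f (.of 1))⁻¹ ∧
        f (.of 1) * (f (.of 0))⁻¹ = g (.of 1) * (g (.of 0))⁻¹ := by
  rw [← inv_mul_eq_inv_mul_iff_mul_inv_eq_mul_inv, ← inv_inj (a := f _ * _), and_comm]
  simp [FreeGroup.ext_hom_iff, Fin.forall_fin_two, amalgMap]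

end TwoCyclic

namespace RectGroup

variable {na nb nc nd : ℕ} {H : Type*} [Group H]

theorem Ra_pow : Ra na nb nc nd ^ na = 1 :=
  PresentedGroup.one_of_mem (x := FreeGroup.of 0 ^ na) (by simp [rectRels])

theorem Rb_pow : Rb na nb nc nd ^ nb = 1 :=
  PresentedGroup.one_of_mem (x := FreeGroup.of 1 ^ nb) (by simp [rectRels])

theorem Rc_pow : Rc na nb nc nd ^ nc = 1 :=
  PresentedGroup.one_of_mem (x := FreeGroup.of 2 ^ nc) (by simp [rectRels])

theorem Rd_pow : Rd na nb nc nd ^ nd = 1 :=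
  PresentedGroup.one_of_mem (x := FreeGroup.of 3 ^ nd) (by simp [rectRels])

theorem Rb_mul_inv_Ra :
    Rb na nb nc nd * (Ra na nb nc nd)⁻¹ = Rd na nb nc nd * (Rc na nb nc nd)⁻¹ :=
  PresentedGroup.mk_eq_mk_of_mul_inv_mem (by simp [rectRels])

theorem Rc_mul_inv_Ra :
    Rc na nb nc nd * (Ra na nb nc nd)⁻¹ = Rd na nb nc nd * (Rb na nb nc nd)⁻¹ :=
  PresentedGroup.mk_eq_mk_of_mul_inv_mem (by simp [rectRels])

/-- The homomorphism out of the rectangle group with prescribed images of the generators. -/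
def lift (a b c d : H) (ha : a ^ na = 1) (hb : b ^ nb = 1) (hc : c ^ nc = 1) (hd : d ^ nd = 1)
    (hba : b * a⁻¹ = d * c⁻¹) (hca : c * a⁻¹ = d * b⁻¹) : RectGroup na nb nc nd →* H :=
  PresentedGroup.toGroup (f := ![a, b, c, d]) (by simp [rectRels, ha, hb, hc, hd, hba, hca])

section lift

variable (a b c d : H) (ha : a ^ na = 1) (hb : b ^ nb = 1) (hc : c ^ nc = 1) (hd : d ^ nd = 1)
  (hba : b * a⁻¹ = d * c⁻¹) (hca : c * a⁻¹ = d * b⁻¹)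

@[simp]
theorem lift_Ra : lift a b c d ha hb hc hd hba hca (Ra na nb nc nd) = a := by
  simp [lift, Ra]

@[simp]
theorem lift_Rb : lift a b c d ha hb hc hd hba hca (Rb na nb nc nd) = b := by
  simp [lift, Rb]

@[simp]
theorem lift_Rc : lift a b c d ha hb hc hd hba hca (Rc na nb nc nd) = c := by
  simp [lift, Rc]

@[simp]
theorem lift_Rd : lift a b c d ha hb hc hd hba hca (Rd na nb nc nd) = d := by
  simp [lift, Rd]

end lift

theorem hom_ext {f g : RectGroup na nb nc nd →* H}
    (ha : f (Ra na nb nc nd) = g (Ra na nb nc nd)) (hb : f (Rb na nb nc nd) = g (Rb na nb nc nd))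
    (hc : f (Rc na nb nc nd) = g (Rc na nb nc nd)) (hd : f (Rd na nb nc nd) = g (Rd na nb nc nd)) :
    f = g :=
  PresentedGroup.ext fun | 0 => ha | 1 => hb | 2 => hc | 3 => hd

variable (na nb nc nd)

/-- The homomorphism `G₁ *_C G₂ →* R` that sends `a, c ∈ G₁` and `b, d ∈ G₂` to the generators of
the same name. -/
def ofAmalgam : Amalgam (amalgMap na nc) (amalgMap nb nd) →* RectGroup na nb nc nd :=
  Amalgam.lift (TwoCyclic.lift (Ra na nb nc nd) (Rc na nb nc nd) Ra_pow Rc_pow)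
    (TwoCyclic.lift (Rb na nb nc nd) (Rd na nb nc nd) Rb_pow Rd_pow)
    ((TwoCyclic.comp_amalgMap_eq_comp_amalgMap_iff _ _).2
      (by simpa using ⟨Rb_mul_inv_Ra, Rc_mul_inv_Ra⟩))

theorem amalgam_mixed_relations :
    let a := Amalgam.inl (amalgMap na nc) (amalgMap nb nd) (.of 0)
    let b := Amalgam.inr (amalgMap na nc) (amalgMap nb nd) (.of 0)
    let c := Amalgam.inl (amalgMap na nc) (amalgMap nb nd) (.of 1)
    let d := Amalgam.inr (amalgMap na nc) (amalgMap nb nd) (.of 1)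
    b * a⁻¹ = d * c⁻¹ ∧ c * a⁻¹ = d * b⁻¹ :=
  (TwoCyclic.comp_amalgMap_eq_comp_amalgMap_iff _ _).1 Amalgam.inl_comp_eq_inr_comp

/-- The homomorphism `R →* G₁ *_C G₂` that sends the generators `a, c` of `R` to those of `G₁`, and
`b, d` to those of `G₂`. -/
def toAmalgam : RectGroup na nb nc nd →* Amalgam (amalgMap na nc) (amalgMap nb nd) :=
  lift (Amalgam.inl _ _ (.of 0)) (Amalgam.inr _ _ (.of 0))
    (Amalgam.inl _ _ (.of 1)) (Amalgam.inr _ _ (.of 1))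
    (by rw [← map_pow, TwoCyclic.of_zero_pow, map_one])
    (by rw [← map_pow, TwoCyclic.of_zero_pow, map_one])
    (by rw [← map_pow, TwoCyclic.of_one_pow, map_one])
    (by rw [← map_pow, TwoCyclic.of_one_pow, map_one])
    (amalgam_mixed_relations na nb nc nd).1 (amalgam_mixed_relations na nb nc nd).2

theorem toAmalgam_comp_ofAmalgam :
    (toAmalgam na nb nc nd).comp (ofAmalgam na nb nc nd) = MonoidHom.id _ :=
  Amalgam.hom_ext
    (TwoCyclic.hom_ext (by simp [toAmalgam, ofAmalgam]) (by simp [toAmalgam, ofAmalgam]))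
    (TwoCyclic.hom_ext (by simp [toAmalgam, ofAmalgam]) (by simp [toAmalgam, ofAmalgam]))

theorem ofAmalgam_comp_toAmalgam :
    (ofAmalgam na nb nc nd).comp (toAmalgam na nb nc nd) = MonoidHom.id _ := by
  apply hom_ext <;> simp [toAmalgam, ofAmalgam]

/-- The rectangle group as the amalgamated free product of `⟨a, c | a^{n_a} = c^{n_c} = 1⟩` and
`⟨b, d | b^{n_b} = d^{n_d} = 1⟩` over the free group on `s, t`. -/
def amalgamEquiv : Amalgam (amalgMap na nc) (amalgMap nb nd) ≃* RectGroup na nb nc nd :=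
  (ofAmalgam na nb nc nd).toMulEquiv (toAmalgam na nb nc nd)
    (toAmalgam_comp_ofAmalgam na nb nc nd) (ofAmalgam_comp_toAmalgam na nb nc nd)

theorem amalgamEquiv_inl_of_zero :
    amalgamEquiv na nb nc nd (Amalgam.inl _ _ (.of 0)) = Ra na nb nc nd := by
  simp [amalgamEquiv, ofAmalgam]

theorem amalgamEquiv_inl_of_one :
    amalgamEquiv na nb nc nd (Amalgam.inl _ _ (.of 1)) = Rc na nb nc nd := by
  simp [amalgamEquiv, ofAmalgam]

theorem amalgamEquiv_inr_of_zero :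
    amalgamEquiv na nb nc nd (Amalgam.inr _ _ (.of 0)) = Rb na nb nc nd := by
  simp [amalgamEquiv, ofAmalgam]

theorem amalgamEquiv_inr_of_one :
    amalgamEquiv na nb nc nd (Amalgam.inr _ _ (.of 1)) = Rd na nb nc nd := by
  simp [amalgamEquiv, ofAmalgam]

end RectGroup

/-- `R` is the amalgamated free product `G₁ *_C G₂` with
`G₁ = ⟨a, c | a^{n_a} = c^{n_c} = 1⟩`, `G₂ = ⟨b, d | b^{n_b} = d^{n_d} = 1⟩`,
`C` free on `s, t`, amalgamated via `s ↦ a c⁻¹, t ↦ c⁻¹ a` and `s ↦ b d⁻¹, t ↦ d⁻¹ b`;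
the isomorphism carries the images of `a, c, b, d` in the pushout to the
generators `a, c, b, d` of `R`. -/
theorem rect_amalgam_ac_bd (na nb nc nd : ℕ)
    (hna : 2 ≤ na) (hnb : 2 ≤ nb) (hnc : 2 ≤ nc) (hnd : 2 ≤ nd) :
    ∃ e : Monoid.PushoutI (twoFamHom (amalgMap na nc) (amalgMap nb nd)) ≃*
        RectGroup na nb nc nd,
      e (Monoid.PushoutI.of (φ := twoFamHom (amalgMap na nc) (amalgMap nb nd)) true
          (PresentedGroup.of 0)) = Ra na nb nc nd ∧
      e (Monoid.PushoutI.of (φ := twoFamHom (amalgMap na nc) (amalgMap nb nd)) true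
          (PresentedGroup.of 1)) = Rc na nb nc nd ∧
      e (Monoid.PushoutI.of (φ := twoFamHom (amalgMap na nc) (amalgMap nb nd)) false
          (PresentedGroup.of 0)) = Rb na nb nc nd ∧
      e (Monoid.PushoutI.of (φ := twoFamHom (amalgMap na nc) (amalgMap nb nd)) false
          (PresentedGroup.of 1)) = Rd na nb nc nd := by
  exact ⟨RectGroup.amalgamEquiv na nb nc nd,
    RectGroup.amalgamEquiv_inl_of_zero na nb nc nd, RectGroup.amalgamEquiv_inl_of_one na nb nc nd,
    RectGroup.amalgamEquiv_inr_of_zero na nb nc nd, RectGroup.amalgamEquiv_inr_of_one na nb nc nd⟩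
end

section
/- The group homomorphism from the free product (ℤ × ℤ) ∗ (ℤ × ℤ) to the cube group S, determined by sending the two standard generators of the first free factor to a b⁻¹ and a c⁻¹ and the two standard generators of the second free factor to b⁻¹ a and c⁻¹ a, is injective; that is, the subgroup D = ⟨a b⁻¹, b⁻¹ a, a c⁻¹, c⁻¹ a⟩ of S is the free product of two free abelian groups of rank 2. -/
/-- The word `u v⁻¹` in the free group on eight generators. -/
def cw (i j : Fin 8) : FreeGroup (Fin 8) := FreeGroup.of i * (FreeGroup.of j)⁻¹

/-- The defining relations of the cube group `S` on generators
`a, b, c, d, e, f, g, h` (indexed `0, …, 7`):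
`a b⁻¹ = c d⁻¹ = e f⁻¹ = g h⁻¹`, `a c⁻¹ = b d⁻¹ = e g⁻¹ = f h⁻¹`,
`a e⁻¹ = b f⁻¹ = c g⁻¹ = d h⁻¹`. -/
def cubeRels : Set (FreeGroup (Fin 8)) :=
  {cw 0 1 * (cw 2 3)⁻¹, cw 2 3 * (cw 4 5)⁻¹, cw 4 5 * (cw 6 7)⁻¹,
    cw 0 2 * (cw 1 3)⁻¹, cw 1 3 * (cw 4 6)⁻¹, cw 4 6 * (cw 5 7)⁻¹,
    cw 0 4 * (cw 1 5)⁻¹, cw 1 5 * (cw 2 6)⁻¹, cw 2 6 * (cw 3 7)⁻¹}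

/-- The cube group `S`. -/
abbrev CubeGroup : Type := PresentedGroup cubeRels

/-- The generator `a` of the cube group. -/
def Sa : CubeGroup := PresentedGroup.of 0
/-- The generator `b` of the cube group. -/
def Sb : CubeGroup := PresentedGroup.of 1
/-- The generator `c` of the cube group. -/
def Sc : CubeGroup := PresentedGroup.of 2
/-- The generator `e` of the cube group. -/
def Se : CubeGroup := PresentedGroup.of 4

/-!
The edge relations make the three edge directions of the cube commute, and conversely commuting
elements `x`, `y`, `z` together with an arbitrary element `t` of a group satisfy them: label the
vertices `a, …, h` by `t, x⁻¹t, y⁻¹t, (xy)⁻¹t, …`. For `A = ℤ × ℤ`, take `x` and `y` in the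
first factor of `A ∗ A`, put `z = 1`, and let `t` be the exchange of the two factors, all inside
the holomorph of `A ∗ A`. Conjugation by `t` carries the first factor to the second one, so the
resulting homomorphism from `S` to the holomorph restricts on `D` to an inverse of `A ∗ A → D`.
-/

open Monoid (Coprod)

section ZSquared

variable {G : Type*} [Group G]

/-- The homomorphism `(m, n) ↦ x ^ m * y ^ n` from `ℤ × ℤ` given by two commuting elements. -/
def zpowersHomProd (x y : G) (h : Commute x y) : Multiplicative (ℤ × ℤ) →* G :=
  ((zpowersHom G x).noncommCoprod (zpowersHom G y) fun m n ↦ h.zpow_zpow m.toAdd n.toAdd).comp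
    (MulEquiv.prodMultiplicative ℤ ℤ).toMonoidHom

theorem zpowersHomProd_apply {x y : G} (h : Commute x y) (v : Multiplicative (ℤ × ℤ)) :
    zpowersHomProd x y h v = x ^ v.toAdd.1 * y ^ v.toAdd.2 :=
  rfl

theorem eq_ofAdd_zpow_mul_ofAdd_zpow (v : Multiplicative (ℤ × ℤ)) :
    v = .ofAdd (1, 0) ^ v.toAdd.1 * .ofAdd (0, 1) ^ v.toAdd.2 :=
  Multiplicative.toAdd.injective <| by simp

theorem monoidHom_ext_multiplicative_int_prod_int {f g : Multiplicative (ℤ × ℤ) →* G}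
    (h₁ : f (.ofAdd (1, 0)) = g (.ofAdd (1, 0))) (h₂ : f (.ofAdd (0, 1)) = g (.ofAdd (0, 1))) :
    f = g := by
  refine MonoidHom.ext fun v ↦ ?_
  rw [eq_ofAdd_zpow_mul_ofAdd_zpow v]
  simp only [map_mul, map_zpow, h₁, h₂]

end ZSquared

section ConjugateFactors

variable {A G H : Type*} [Monoid A] [Group G] [Group H]

/-- The homomorphism from `A ∗ A` that is `f` on the first factor and `a ↦ t⁻¹ * f a * t` on the
second one. -/
def coprodLiftConj (f : A →* G) (t : G) : Coprod A A →* G :=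
  Coprod.lift f ((MulAut.conj t⁻¹).toMonoidHom.comp f)

@[simp]
theorem coprodLiftConj_inl (f : A →* G) (t : G) (a : A) :
    coprodLiftConj f t (Coprod.inl a) = f a :=
  Coprod.lift_apply_inl _ _ a

@[simp]
theorem coprodLiftConj_inr (f : A →* G) (t : G) (a : A) :
    coprodLiftConj f t (Coprod.inr a) = t⁻¹ * f a * t := by
  simp [coprodLiftConj]

theorem comp_coprodLiftConj (ψ : G →* H) (f : A →* G) (t : G) :
    ψ.comp (coprodLiftConj f t) = coprodLiftConj (ψ.comp f) (ψ t) := by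
  ext a <;> simp

end ConjugateFactors

section Holomorph

variable {A G : Type*} [Group A] [Group G]

/-- The holomorph of a group: its semidirect product with its full automorphism group. -/
abbrev Holomorph (G : Type*) [Group G] : Type _ :=
  G ⋊[MonoidHom.id (MulAut G)] MulAut G

/-- The automorphism of `A ∗ A` exchanging the two factors. -/
def coprodSwapAut (A : Type*) [Group A] : MulAut (Coprod A A) :=
  MulEquiv.coprodComm A A

theorem coprodLiftConj_inr_coprodSwapAut :
    coprodLiftConj (SemidirectProduct.inl.comp Coprod.inl)
        (SemidirectProduct.inr (coprodSwapAut A) : Holomorph (Coprod A A)) =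
      SemidirectProduct.inl := by
  ext1
  · ext1 a
    simp
  · ext1 a
    have h := SemidirectProduct.inl_aut_inv (φ := MonoidHom.id _) (coprodSwapAut A) (Coprod.inl a)
    have h_swap : (coprodSwapAut A)⁻¹ (Coprod.inl a) = Coprod.inr a := Coprod.swap_inl a
    simpa [h_swap] using h.symm

theorem coprodLiftConj_injective_of_holomorph {f : A →* G} {t : G}
    (ψ : G →* Holomorph (Coprod A A)) (hf : ψ.comp f = SemidirectProduct.inl.comp Coprod.inl)
    (ht : ψ t = SemidirectProduct.inr (coprodSwapAut A)) :
    Function.Injective (coprodLiftConj f t) := by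
  have h_comp : ψ.comp (coprodLiftConj f t) = SemidirectProduct.inl := by
    rw [comp_coprodLiftConj, hf, ht, coprodLiftConj_inr_coprodSwapAut]
  have h_inj : Function.Injective (ψ ∘ coprodLiftConj f t) := by
    rw [← MonoidHom.coe_comp, h_comp]
    exact SemidirectProduct.inl_injective
  exact h_inj.of_comp

end Holomorph

section VertexLabels

variable {A G : Type*} [Group A] [Group G]

theorem lift_inv_mul_cw (f : A →* G) (t : G) (v : Fin 8 → A) (i j : Fin 8) :
    FreeGroup.lift (fun m ↦ (f (v m))⁻¹ * t) (cw i j) = f ((v i)⁻¹ * v j) := by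
  simp [cw]

theorem lift_cw_mul_inv_cw_eq_one_of_parallel (f : A →* G) (t : G) {v : Fin 8 → A} {i j k l : Fin 8}
    (h : (v i)⁻¹ * v j = (v k)⁻¹ * v l) :
    FreeGroup.lift (fun m ↦ (f (v m))⁻¹ * t) (cw i j * (cw k l)⁻¹) = 1 := by
  rw [map_mul, map_inv, mul_inv_eq_one, lift_inv_mul_cw, lift_inv_mul_cw, h]

end VertexLabels

section CubeLift

variable {A G : Type*} [CommGroup A] [Group G]

/-- The vertices of the cube spanned by `x`, `y`, `z`, in the order `a, …, h` in which the relations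
of the cube group name them. -/
def cubeVertex (x y z : A) : Fin 8 → A :=
  ![1, x, y, x * y, z, x * z, y * z, x * y * z]

theorem lift_cubeVertex_eq_one (f : A →* G) (t : G) (x y z : A) :
    ∀ r ∈ cubeRels, FreeGroup.lift (fun k ↦ (f (cubeVertex x y z k))⁻¹ * t) r = 1 := by
  simp only [cubeRels, Set.forall_mem_insert, Set.mem_singleton_iff, forall_eq]
  refine ⟨?_, ?_, ?_, ?_, ?_, ?_, ?_, ?_, ?_⟩ <;>
    refine lift_cw_mul_inv_cw_eq_one_of_parallel f t ?_ <;>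
    rw [inv_mul_eq_div, inv_mul_eq_div, div_eq_div_iff_mul_eq_mul] <;>
    simp [cubeVertex, mul_comm, mul_left_comm]

/-- The homomorphism from the cube group that sends its generators to `f(v)⁻¹ * t`, where `v` runs
through the vertices of the cube spanned by `x`, `y`, `z` in a commutative group. -/
def cubeLift (f : A →* G) (t : G) (x y z : A) : CubeGroup →* G :=
  PresentedGroup.toGroup (lift_cubeVertex_eq_one f t x y z)

variable (f : A →* G) (t : G) (x y z : A)

@[simp]
theorem cubeLift_Sa : cubeLift f t x y z Sa = t := by
  simp [cubeLift, Sa, cubeVertex]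

@[simp]
theorem cubeLift_Sb : cubeLift f t x y z Sb = (f x)⁻¹ * t := by
  simp [cubeLift, Sb, cubeVertex]

@[simp]
theorem cubeLift_Sc : cubeLift f t x y z Sc = (f y)⁻¹ * t := by
  simp [cubeLift, Sc, cubeVertex]

end CubeLift

theorem commute_mul_inv_of_parallel {G : Type*} [Group G] {a b c d : G}
    (h₁ : a * b⁻¹ = c * d⁻¹) (h₂ : a * c⁻¹ = b * d⁻¹) : Commute (a * b⁻¹) (a * c⁻¹) :=
  calc
    a * b⁻¹ * (a * c⁻¹) = a * d⁻¹ := by rw [h₂]; group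
    _ = a * c⁻¹ * (a * b⁻¹) := by rw [h₁]; group

theorem of_mul_inv_of_eq_of_mem_cubeRels {i j k l : Fin 8} (h : cw i j * (cw k l)⁻¹ ∈ cubeRels) :
    (PresentedGroup.of i * (PresentedGroup.of j)⁻¹ : CubeGroup) =
      PresentedGroup.of k * (PresentedGroup.of l)⁻¹ :=
  mul_inv_eq_one.mp (PresentedGroup.one_of_mem h)

theorem commute_Sa_mul_inv_Sb_Sa_mul_inv_Sc : Commute (Sa * Sb⁻¹) (Sa * Sc⁻¹) :=
  commute_mul_inv_of_parallel
    (of_mul_inv_of_eq_of_mem_cubeRels (i := 0) (j := 1) (k := 2) (l := 3) (by simp [cubeRels]))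
    (of_mul_inv_of_eq_of_mem_cubeRels (i := 0) (j := 2) (k := 1) (l := 3) (by simp [cubeRels]))

/-- The homomorphism from `ℤ × ℤ` to the cube group given by the edges `a b⁻¹` and `a c⁻¹`. -/
def cubeFaceHom : Multiplicative (ℤ × ℤ) →* CubeGroup :=
  zpowersHomProd (Sa * Sb⁻¹) (Sa * Sc⁻¹) commute_Sa_mul_inv_Sb_Sa_mul_inv_Sc

@[simp]
theorem cubeFaceHom_ofAdd_one_zero : cubeFaceHom (.ofAdd (1, 0)) = Sa * Sb⁻¹ := by
  simp [cubeFaceHom, zpowersHomProd_apply]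

@[simp]
theorem cubeFaceHom_ofAdd_zero_one : cubeFaceHom (.ofAdd (0, 1)) = Sa * Sc⁻¹ := by
  simp [cubeFaceHom, zpowersHomProd_apply]

theorem cubeLift_comp_cubeFaceHom {G : Type*} [Group G] (f : Multiplicative (ℤ × ℤ) →* G) (t : G)
    (z : Multiplicative (ℤ × ℤ)) :
    (cubeLift f t (.ofAdd (1, 0)) (.ofAdd (0, 1)) z).comp cubeFaceHom = f :=
  monoidHom_ext_multiplicative_int_prod_int (by simp) (by simp)

theorem coprodLiftConj_cubeFaceHom_injective :
    Function.Injective (coprodLiftConj cubeFaceHom Sa) :=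
  coprodLiftConj_injective_of_holomorph (cubeLift _ _ _ _ 1) (cubeLift_comp_cubeFaceHom _ _ _)
    (cubeLift_Sa _ _ _ _ _)

/-- The homomorphism from the free product `(ℤ × ℤ) ∗ (ℤ × ℤ)` to the cube group `S`
sending the standard generators of the first factor to `a b⁻¹` and `a c⁻¹` and those
of the second factor to `b⁻¹ a` and `c⁻¹ a` is injective: the subgroup
`D = ⟨a b⁻¹, b⁻¹ a, a c⁻¹, c⁻¹ a⟩` of `S` is the free product of two free abelian
groups of rank 2. -/
theorem cube_D_free_product_of_free_abelians :
    ∃ φ : Monoid.Coprod (Multiplicative (ℤ × ℤ)) (Multiplicative (ℤ × ℤ)) →* CubeGroup,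
      φ (Monoid.Coprod.inl (Multiplicative.ofAdd ((1, 0) : ℤ × ℤ))) = Sa * Sb⁻¹ ∧
      φ (Monoid.Coprod.inl (Multiplicative.ofAdd ((0, 1) : ℤ × ℤ))) = Sa * Sc⁻¹ ∧
      φ (Monoid.Coprod.inr (Multiplicative.ofAdd ((1, 0) : ℤ × ℤ))) = Sb⁻¹ * Sa ∧
      φ (Monoid.Coprod.inr (Multiplicative.ofAdd ((0, 1) : ℤ × ℤ))) = Sc⁻¹ * Sa ∧
      Function.Injective φ := by
  exact ⟨coprodLiftConj cubeFaceHom Sa, by simp, by simp, by simp, by simp,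
    coprodLiftConj_cubeFaceHom_injective⟩
end
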